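/- There exist an integer k0 and, for each k >= k0, a real delta = delta(k) > 0 such that for every density r = 2^k * ln 2 - rho with 0 < rho <= 2, m = floor(r*n), and all sufficiently large n, the planted model satisfies Pr_Lambda[ dist(sigma, sigma_MAJ(Phi)) > (1/2 - delta) * n ] <= exp(-2*n*r/(k^9 * 4^k)), where (Phi, sigma) is chosen uniformly at random from the set Lambda of all pairs of a k-CNF formula Phi with m clauses over V and a satisfying assignment sigma of Phi. -/

import Mathlib

open Classical Finset Filter

noncomputable section

/-- A literal: a variable index together with a sign (`true` = positive occurrence). -/
abbrev Lit (n : ℕ) := Fin n × Bool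

/-- A clause: an ordered `k`-tuple of literals. -/
abbrev Clause (n k : ℕ) := Fin k → Lit n

/-- A `k`-CNF formula with `m` clauses over `n` variables. -/
abbrev Formula (n k m : ℕ) := Fin m → Clause n k

/-- A truth assignment. -/
abbrev Assignment (n : ℕ) := Fin n → Bool

/-- The truth value of a literal under an assignment. -/
def litVal {n : ℕ} (σ : Assignment n) (l : Lit n) : Bool :=
  if l.2 then σ l.1 else !(σ l.1)

/-- `σ` satisfies `Φ` if every clause contains at least one true literal. -/
def Satisfies {n k m : ℕ} (σ : Assignment n) (Φ : Formula n k m) : Prop :=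
  ∀ i : Fin m, ∃ j : Fin k, litVal σ (Φ i j) = true

/-- The set of satisfying assignments of `Φ`. -/
def satSet (n k m : ℕ) (Φ : Formula n k m) : Finset (Assignment n) :=
  univ.filter fun σ => Satisfies σ Φ

/-- The number of satisfying assignments of `Φ`. -/
def satCount (n k m : ℕ) (Φ : Formula n k m) : ℕ := (satSet n k m Φ).card

/-- Probability of an event under the uniformly random formula `Φ_k(n,m)`. -/
def prF (n k m : ℕ) (E : Formula n k m → Prop) : ℝ :=
  ((univ.filter fun Φ : Formula n k m => E Φ).card : ℝ) / (Fintype.card (Formula n k m) : ℝ)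

/-- Expectation of a function of the uniformly random formula `Φ_k(n,m)`. -/
def expF (n k m : ℕ) (f : Formula n k m → ℝ) : ℝ :=
  (∑ Φ : Formula n k m, f Φ) / (Fintype.card (Formula n k m) : ℝ)

/-- The number of occurrences of the literal `l` in `Φ`. -/
def occ (n k m : ℕ) (Φ : Formula n k m) (l : Lit n) : ℕ :=
  (univ.filter fun p : Fin m × Fin k => Φ p.1 p.2 = l).card

/-- The (signed) degree sequence of `Φ`. -/
def degSeq (n k m : ℕ) (Φ : Formula n k m) : Lit n → ℕ := occ n k m Φ

/-- Hamming distance between two assignments. -/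
def hdist {n : ℕ} (σ τ : Assignment n) : ℕ :=
  (univ.filter fun x => σ x ≠ τ x).card

/-- The majority-vote assignment: `x ↦ true` iff `x` occurs more often positively
than negatively. -/
def sigmaMaj (n k m : ℕ) (Φ : Formula n k m) : Assignment n :=
  fun x => decide (occ n k m Φ (x, false) < occ n k m Φ (x, true))

/-- The planted model: the set of pairs of a formula and a satisfying assignment. -/
def Planted (n k m : ℕ) : Finset (Formula n k m × Assignment n) :=
  univ.filter fun p => Satisfies p.2 p.1

section PoissonPart
open MeasureTheory ProbabilityTheory
open scoped NNReal

/-- Sign of `a - b`, as a real number. -/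
def sg (a b : ℕ) : ℝ := if b < a then 1 else if a < b then -1 else 0

lemma sg_abs (a b : ℕ) : ‖sg a b‖ ≤ 1 := by
  unfold sg; split_ifs <;> simp

lemma sg_swap (a b : ℕ) : sg b a = - sg a b := by
  unfold sg; split_ifs <;> first | omega | simp

lemma sg_mono {a a' : ℕ} (h : a ≤ a') (b : ℕ) : sg a b ≤ sg a' b := by
  unfold sg; split_ifs <;> first | omega | norm_num

lemma sg_succ (a b : ℕ) : sg a b + (if b = a then 1 else 0) ≤ sg (a + 1) b := by
  unfold sg; split_ifs <;> first | omega | norm_num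

lemma integrable_bdd {α : Type*} [MeasurableSpace α] [DiscreteMeasurableSpace α] [Countable α]
    (μ : Measure α) [IsFiniteMeasure μ] (f : α → ℝ)
    (C : ℝ) (h : ∀ a, ‖f a‖ ≤ C) : Integrable f μ :=
  Integrable.of_bound (Measurable.of_discrete.aestronglyMeasurable) C (Eventually.of_forall h)

lemma norm_integral_le_one (μ : Measure ℕ) [IsProbabilityMeasure μ] (f : ℕ → ℝ)
    (h : ∀ a, ‖f a‖ ≤ 1) : ‖∫ a, f a ∂μ‖ ≤ 1 := by
  simpa using norm_integral_le_of_norm_le_const (μ := μ) (Eventually.of_forall h)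

/-- Moments of the Poisson distribution. -/
lemma poisson_var (w : ℝ≥0) :
    HasSum (fun j : ℕ => Real.exp (-w) * w ^ j / (j.factorial : ℝ) * ((j : ℝ) - w) ^ 2) w := by
  have h0 := hasSum_one_poissonMeasure w
  have h1 : HasSum (fun j : ℕ => Real.exp (-w) * w ^ j / (j.factorial : ℝ) * j) (w : ℝ) := by
    rw [← hasSum_nat_add_iff' 1]
    simp only [Finset.range_one, Finset.sum_singleton, Nat.cast_zero, mul_zero, sub_zero]
    have := h0.mul_left (w : ℝ)
    rw [mul_one] at this
    refine this.congr_fun ?_ 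
    intro j
    rw [Nat.factorial_succ]
    push_cast
    have : (j.factorial : ℝ) ≠ 0 := by positivity
    have : (j : ℝ) + 1 ≠ 0 := by positivity
    field_simp
    ring
  have h2 : HasSum (fun j : ℕ => Real.exp (-w) * w ^ j / (j.factorial : ℝ) * (j * (j - 1)))
      ((w : ℝ) * w) := by
    rw [← hasSum_nat_add_iff' 1]
    simp only [Finset.range_one, Finset.sum_singleton, Nat.cast_zero, mul_zero, sub_zero, zero_mul]
    have := h1.mul_left (w : ℝ)
    refine this.congr_fun ?_ 
    intro j
    rw [Nat.factorial_succ]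
    push_cast
    have : (j.factorial : ℝ) ≠ 0 := by positivity
    have : (j : ℝ) + 1 ≠ 0 := by positivity
    field_simp
    ring
  have := (h2.add (h1.mul_left (1 - 2 * (w : ℝ)))).add (h0.mul_left ((w : ℝ) ^ 2))
  convert this using 1
  · ext j; ring
  · ring

lemma poisson_collision (w : ℝ≥0) (L : ℝ) (hL : 0 < L) (hw : 2 * (w : ℝ) ≤ L ^ 2) :
    1 / (4 * (2 * L + 1)) ≤ ∫ a, (poissonMeasure w).real {a} ∂(poissonMeasure w) := by
  set p : ℕ → ℝ := fun j => Real.exp (-w) * w ^ j / (j.factorial : ℝ) with hp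
  have hp0 : ∀ j, 0 ≤ p j := fun j => by positivity
  have hp1 : HasSum p 1 := hasSum_one_poissonMeasure w
  have hv := poisson_var w
  set I : Finset ℕ := Finset.Icc ⌈(w : ℝ) - L⌉₊ ⌊(w : ℝ) + L⌋₊ with hI
  have hcard : (#I : ℝ) ≤ 2 * L + 1 := by
    rw [hI, Nat.card_Icc]
    have h1 : (⌊(w : ℝ) + L⌋₊ : ℝ) ≤ w + L := Nat.floor_le (by positivity)
    have h2 : (w : ℝ) - L ≤ ⌈(w : ℝ) - L⌉₊ := Nat.le_ceil _
    rcases le_total ⌈(w : ℝ) - L⌉₊ (⌊(w : ℝ) + L⌋₊ + 1) with h | h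
    · rw [Nat.cast_sub h]; push_cast; linarith
    · rw [Nat.sub_eq_zero_of_le h]; simp; positivity
  have hIc : ∀ j, j ∉ I → L ^ 2 ≤ ((j : ℝ) - w) ^ 2 := by
    intro j hj
    rw [hI, Finset.mem_Icc, not_and_or] at hj
    rcases hj with hj | hj
    · have : (j : ℝ) < w - L := Nat.lt_ceil.mp (not_le.mp hj)
      nlinarith
    · have : (w : ℝ) + L < j := (Nat.floor_lt (by positivity)).mp (not_le.mp hj)
      nlinarith
  -- Chebyshev
  have hs : 1 / 2 ≤ ∑ j ∈ I, p j := by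
    have hf : HasSum (fun j => if j ∈ I then p j else 0) (∑ j ∈ I, p j) := by
      have : HasSum (fun j => if j ∈ I then p j else 0) (∑ j ∈ I, if j ∈ I then p j else 0) :=
        hasSum_sum_of_ne_finset_zero (by intro b hb; simp [hb])
      rwa [Finset.sum_congr rfl (fun j hj => if_pos hj)] at this
    have := hasSum_le (f := p) (g := fun j => (if j ∈ I then p j else 0) +
        (p j * ((j : ℝ) - w) ^ 2) * (1 / L ^ 2)) ?_ hp1 (hf.add (hv.mul_right (1 / L ^ 2)))
    · have h3 : (w : ℝ) * (1 / L ^ 2) ≤ 1 / 2 := by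
        rw [mul_one_div, div_le_iff₀ (by positivity)]; linarith
      linarith
    · intro j
      by_cases hj : j ∈ I
      · simp only [hj, if_true]
        have : 0 ≤ p j * ((j : ℝ) - w) ^ 2 * (1 / L ^ 2) := by
          have := hp0 j; positivity
        linarith
      · simp only [hj, if_false, zero_add]
        have h1 := hIc j hj
        rw [mul_assoc]
        apply le_mul_of_one_le_right (hp0 j)
        rw [mul_one_div, one_le_div (by positivity)]
        exact h1
  have hcs : (∑ j ∈ I, p j) ^ 2 ≤ #I * ∑ j ∈ I, p j ^ 2 := sq_sum_le_card_mul_sum_sq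
  have hint : ∑ j ∈ I, p j ^ 2 ≤ ∫ a, (poissonMeasure w).real {a} ∂(poissonMeasure w) := by
    have hi : Integrable (fun a => (poissonMeasure w).real {a}) (poissonMeasure w) :=
      integrable_bdd _ _ 1 (fun a => by
        rw [Real.norm_eq_abs, abs_of_nonneg measureReal_nonneg]
        exact measureReal_le_one)
    have := hasSum_integral_poissonMeasure hi
    refine le_trans (le_of_eq ?_) (sum_le_hasSum I ?_ this)
    · apply Finset.sum_congr rfl
      intro j _
      rw [poissonMeasure_real_singleton, smul_eq_mul, sq]
    · intro j _
      rw [poissonMeasure_real_singleton, smul_eq_mul]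
      positivity
  have h4 : (1 / 4 : ℝ) ≤ (∑ j ∈ I, p j) ^ 2 := by nlinarith
  have h5 : 0 ≤ ∑ j ∈ I, p j ^ 2 := Finset.sum_nonneg (fun j _ => sq_nonneg _)
  rw [div_le_iff₀ (by positivity)]
  have h6 : (#I : ℝ) * ∑ j ∈ I, p j ^ 2 ≤ (2 * L + 1) * ∑ j ∈ I, p j ^ 2 := by gcongr
  have h7 := mul_le_mul_of_nonneg_right hint (by positivity : (0:ℝ) ≤ 4 * (2 * L + 1))
  linarith

lemma poisson_gap (w η : ℝ≥0) (hη : 1 ≤ η) (L : ℝ) (hL : 0 < L) (hw : 2 * (w : ℝ) ≤ L ^ 2) :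
    1 / (8 * (2 * L + 1)) ≤
      ∫ a, (∫ b, sg a b ∂(poissonMeasure w)) ∂(poissonMeasure (w + η)) := by
  set μ := poissonMeasure w
  set ν := poissonMeasure η
  set φ : ℕ → ℝ := fun a => ∫ b, sg a b ∂μ with hφ
  have isg : ∀ a, Integrable (fun b => sg a b) μ := fun a => integrable_bdd _ _ 1 (sg_abs a)
  have hφ1 : ∀ a, ‖φ a‖ ≤ 1 := fun a => norm_integral_le_one μ _ (sg_abs a)
  have iφ : ∀ e, Integrable (fun a => φ (a + e)) μ := fun e => integrable_bdd _ _ 1 (fun a => hφ1 _)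
  set ψ : ℕ → ℝ := fun e => ∫ a, φ (a + e) ∂μ with hψ
  have hψ1 : ∀ e, ‖ψ e‖ ≤ 1 := fun e => norm_integral_le_one μ _ (fun a => hφ1 _)
  have hconv : ∫ a, φ a ∂(poissonMeasure (w + η)) = ∫ e, ψ e ∂ν := by
    rw [add_comm, ← poissonMeasure_conv_poissonMeasure, integral_conv]
    · apply integral_congr_ae
      refine Eventually.of_forall fun e => ?_
      simp only [hψ]
      apply integral_congr_ae
      exact Eventually.of_forall fun a => by simp only [add_comm]
    · exact integrable_bdd _ _ 1 hφ1
  have hψ0 : ψ 0 = 0 := by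
    have h : ψ 0 = - ψ 0 := by
      simp only [hψ, hφ, add_zero]
      have hi : Integrable (Function.uncurry sg) (μ.prod μ) :=
        integrable_bdd _ _ 1 (fun x => sg_abs x.1 x.2)
      calc ∫ a, ∫ b, sg a b ∂μ ∂μ = ∫ b, ∫ a, sg a b ∂μ ∂μ := integral_integral_swap hi
        _ = ∫ b, ∫ a, - sg b a ∂μ ∂μ := by simp_rw [← sg_swap]
        _ = - ∫ b, ∫ a, sg b a ∂μ ∂μ := by simp only [integral_neg]
    linarith
  set c := 1 / (4 * (2 * L + 1)) with hc
  have hc0 : 0 ≤ c := by positivity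
  have hmonoφ : Monotone φ := by
    intro a a' h
    exact integral_mono (isg a) (isg a') (fun b => sg_mono h b)
  have hmono : Monotone ψ := by
    intro e e' h
    exact integral_mono (iφ e) (iφ e') (fun a => hmonoφ (by omega))
  have hψone : c ≤ ψ 1 := by
    have h1 : ∀ a, φ a + μ.real {a} ≤ φ (a + 1) := by
      intro a
      have h2 : μ.real {a} = ∫ b, (if b = a then (1 : ℝ) else 0) ∂μ := by
        rw [← integral_indicator_one (measurableSet_singleton a)]
        apply integral_congr_ae
        refine Eventually.of_forall fun b => ?_
        by_cases h : b = a <;> simp [h]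
      rw [h2, hφ]
      simp only
      have hi : Integrable (fun b => if b = a then (1 : ℝ) else 0) μ :=
        integrable_bdd _ _ 1 (fun b => by split_ifs <;> simp)
      rw [← integral_add (isg a) hi]
      exact integral_mono ((isg a).add hi) (isg (a + 1)) (fun b => sg_succ a b)
    have hir : Integrable (fun a => μ.real {a}) μ :=
      integrable_bdd _ _ 1 (fun a => by
        rw [Real.norm_eq_abs, abs_of_nonneg measureReal_nonneg]
        exact measureReal_le_one)
    have h3 : ψ 0 + ∫ a, μ.real {a} ∂μ ≤ ψ 1 := by
      simp only [hψ]
      rw [← integral_add (iφ 0) hir]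
      exact integral_mono ((iφ 0).add hir) (iφ 1) (fun a => by simpa using h1 a)
    have := poisson_collision w L hL hw
    linarith
  have hlow : ∀ e, c * (1 - if e = 0 then 1 else 0) ≤ ψ e := by
    intro e
    by_cases h : e = 0
    · simp [h, hψ0]
    · simp only [h, if_false, sub_zero, mul_one]
      exact hψone.trans (hmono (by omega))
  rw [hconv]
  have hi0 : Integrable (fun e : ℕ => if e = 0 then (1 : ℝ) else 0) ν :=
    integrable_bdd _ _ 1 (fun b => by split_ifs <;> simp)
  have hν0 : ∫ e, (if e = 0 then (1 : ℝ) else 0) ∂ν ≤ 1 / 2 := by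
    have h2 : ν.real {0} = ∫ b, (if b = 0 then (1 : ℝ) else 0) ∂ν := by
      rw [← integral_indicator_one (measurableSet_singleton 0)]
      apply integral_congr_ae
      refine Eventually.of_forall fun b => ?_
      by_cases h : b = 0 <;> simp [h]
    rw [← h2, poissonMeasure_real_singleton]
    simp only [pow_zero, mul_one, Nat.factorial_zero, Nat.cast_one, div_one]
    have h3 : Real.exp (-(η : ℝ)) ≤ Real.exp (-1) := Real.exp_le_exp.mpr (by
      have : (1 : ℝ) ≤ η := by exact_mod_cast hη
      linarith)
    have h4 : Real.exp (-1) ≤ 1 / 2 := by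
      have := Real.exp_one_gt_d9
      rw [Real.exp_neg, ← one_div]
      apply one_div_le_one_div_of_le <;> linarith
    linarith
  have h1 : ∫ e, c * (1 - if e = 0 then (1 : ℝ) else 0) ∂ν ≤ ∫ e, ψ e ∂ν :=
    integral_mono (((integrable_const 1).sub hi0).const_mul c)
      (integrable_bdd _ _ 1 hψ1) hlow
  rw [integral_const_mul, integral_sub (integrable_const 1) hi0] at h1
  simp only [integral_const, probReal_univ, smul_eq_mul, mul_one] at h1
  have h5 : c * (1 / 2) ≤ c * (1 - ∫ e, (if e = 0 then (1 : ℝ) else 0) ∂ν) :=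
    mul_le_mul_of_nonneg_left (by linarith) hc0
  have h6 : 1 / (8 * (2 * L + 1)) = c * (1 / 2) := by rw [hc]; field_simp; norm_num
  linarith

lemma poisson_mgf (z w : ℝ) (hw0 : 0 ≤ w) (hz : w + 1 ≤ z) (L : ℝ) (hL : 0 < L)
    (hw : 2 * w ≤ L ^ 2) (γ : ℝ) (hγ0 : 0 ≤ γ) (hγ : γ ≤ 1 / (16 * (2 * L + 1))) (T F : ℕ) :
    ∑ a ∈ range (T + 1), ∑ b ∈ range (F + 1), (z ^ a / (a.factorial : ℝ)) *
      (w ^ b / (b.factorial : ℝ)) * (Real.cosh γ - sg a b * Real.sinh γ) ≤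
      Real.exp (z + w) * Real.exp (-γ ^ 2) := by
  lift w to ℝ≥0 using hw0
  obtain ⟨η, hη⟩ : ∃ η : ℝ≥0, z = w + η := ⟨(z - w).toNNReal, by
    rw [Real.coe_toNNReal _ (by linarith)]; ring⟩
  subst hη
  have hη1 : 1 ≤ η := by
    have : (1 : ℝ) ≤ η := by linarith
    exact_mod_cast this
  have hgap := poisson_gap w η hη1 L hL hw
  set μ := poissonMeasure w with hμ
  set ν := poissonMeasure (w + η) with hν
  set g : ℕ → ℕ → ℝ := fun a b => Real.cosh γ - sg a b * Real.sinh γ with hg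
  have hsinh : 0 ≤ Real.sinh γ := Real.sinh_nonneg_iff.mpr hγ0
  have hg0 : ∀ a b, 0 ≤ g a b := by
    intro a b
    have h1 := (abs_le.mp (sg_abs a b)).2
    have h2 := Real.sinh_lt_cosh γ
    simp only [hg]
    nlinarith
  have isg : ∀ a, Integrable (fun b => sg a b) μ := fun a => integrable_bdd _ _ 1 (sg_abs a)
  have ig : ∀ a, Integrable (fun b => g a b) μ := fun a =>
    (integrable_const _).sub ((isg a).mul_const _)
  set φ : ℕ → ℝ := fun a => ∫ b, sg a b ∂μ with hφ
  have hφ1 : ∀ a, ‖φ a‖ ≤ 1 := fun a => norm_integral_le_one μ _ (sg_abs a)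
  have iφ : Integrable φ ν := integrable_bdd _ _ 1 hφ1
  have hG : ∀ a, ∫ b, g a b ∂μ = Real.cosh γ - φ a * Real.sinh γ := by
    intro a
    simp only [hg]
    rw [integral_sub (integrable_const _) ((isg a).mul_const _), integral_mul_const]
    simp [hφ]
  have iG : Integrable (fun a => ∫ b, g a b ∂μ) ν := by
    simp_rw [hG]
    exact (integrable_const _).sub (iφ.mul_const _)
  have hGG : ∫ a, ∫ b, g a b ∂μ ∂ν = Real.cosh γ - (∫ a, φ a ∂ν) * Real.sinh γ := by
    simp_rw [hG]
    rw [integral_sub (integrable_const _) (iφ.mul_const _), integral_mul_const]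
    simp
  have h1 : ∀ a, ∑ b ∈ range (F + 1), (w : ℝ) ^ b / (b.factorial : ℝ) * g a b ≤
      Real.exp w * ∫ b, g a b ∂μ := by
    intro a
    have := sum_le_hasSum (range (F + 1)) (fun b _ => by have := hg0 a b; positivity)
      ((hasSum_integral_poissonMeasure (ig a)).mul_left (Real.exp w))
    refine le_trans (le_of_eq ?_) this
    apply Finset.sum_congr rfl
    intro b _
    rw [smul_eq_mul, Real.exp_neg]
    field_simp
  have hGnn : ∀ a, 0 ≤ ∫ b, g a b ∂μ := fun a => integral_nonneg (hg0 a)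
  have h2 : ∑ a ∈ range (T + 1), ((w : ℝ) + η) ^ a / (a.factorial : ℝ) * ∫ b, g a b ∂μ ≤
      Real.exp (w + η) * ∫ a, ∫ b, g a b ∂μ ∂ν := by
    have := sum_le_hasSum (range (T + 1)) (fun a _ => by have := hGnn a; positivity)
      ((hasSum_integral_poissonMeasure iG).mul_left (Real.exp (w + η)))
    refine le_trans (le_of_eq ?_) this
    apply Finset.sum_congr rfl
    intro b _
    rw [smul_eq_mul, Real.exp_neg]
    push_cast
    field_simp
  have hfin : Real.cosh γ - (∫ a, φ a ∂ν) * Real.sinh γ ≤ Real.exp (-γ ^ 2) := by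
    have hLL : 1 / (16 * (2 * L + 1)) ≤ 1 / 16 := by
      apply one_div_le_one_div_of_le <;> linarith
    have hγ1 : γ ≤ 1 / 16 := by linarith
    have hd : 2 * γ ≤ ∫ a, φ a ∂ν := by
      have : 1 / (8 * (2 * L + 1)) = 2 * (1 / (16 * (2 * L + 1))) := by field_simp; norm_num
      linarith
    have hs : γ ≤ Real.sinh γ := Real.self_le_sinh_iff.mpr hγ0
    have hcosh := Real.cosh_le_exp_half_sq γ
    have he : Real.exp (γ ^ 2 / 2) ≤ 1 + γ ^ 2 := by
      have h := Real.abs_exp_sub_one_sub_id_le (x := γ ^ 2 / 2) (by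
        rw [abs_of_nonneg (by positivity)]; nlinarith)
      have h' := (abs_le.mp h).2
      have h'' : γ ^ 2 ≤ 1 := by nlinarith
      nlinarith [sq_nonneg γ]
    have h3 : 2 * γ * γ ≤ (∫ a, φ a ∂ν) * Real.sinh γ :=
      mul_le_mul hd hs hγ0 (le_trans (by positivity) hd)
    have h4 := Real.add_one_le_exp (-γ ^ 2)
    nlinarith
  calc _ = ∑ a ∈ range (T + 1), ((w : ℝ) + η) ^ a / (a.factorial : ℝ) *
        ∑ b ∈ range (F + 1), (w : ℝ) ^ b / (b.factorial : ℝ) * g a b := by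
        apply Finset.sum_congr rfl
        intro a _
        rw [Finset.mul_sum]
        apply Finset.sum_congr rfl
        intro b _
        simp only [hg]; ring
    _ ≤ ∑ a ∈ range (T + 1), ((w : ℝ) + η) ^ a / (a.factorial : ℝ) *
        (Real.exp w * ∫ b, g a b ∂μ) := by
        apply Finset.sum_le_sum
        intro a _
        apply mul_le_mul_of_nonneg_left (h1 a) (by positivity)
    _ = Real.exp w * ∑ a ∈ range (T + 1), ((w : ℝ) + η) ^ a / (a.factorial : ℝ) *
        ∫ b, g a b ∂μ := by
        rw [Finset.mul_sum]
        apply Finset.sum_congr rfl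
        intro a _
        ring
    _ ≤ Real.exp w * (Real.exp (w + η) * Real.exp (-γ ^ 2)) := by
        apply mul_le_mul_of_nonneg_left _ (Real.exp_nonneg _)
        refine h2.trans (mul_le_mul_of_nonneg_left ?_ (Real.exp_nonneg _))
        rw [hGG]; exact hfin
    _ = _ := by rw [Real.exp_add (↑w + ↑η) ↑w]; ring

end PoissonPart

section CountingPart

/-- Fibre sizes of a function. -/
def fib {S : Type*} [Fintype S] {n : ℕ} (v : S → Fin n) : Fin n → ℕ :=
  fun x => #{s | v s = x}

lemma fib_le {S : Type*} [Fintype S] {n : ℕ} (v : S → Fin n) (x : Fin n) :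
    fib v x ≤ Fintype.card S := by
  unfold fib; exact Finset.card_le_univ _

lemma fib_sum {S : Type*} [Fintype S] {n : ℕ} (v : S → Fin n) :
    ∑ x, fib v x = Fintype.card S := by
  unfold fib
  rw [← Finset.card_univ]
  exact (Finset.card_eq_sum_card_fiberwise (f := v) (s := univ) (t := univ)
    (fun _ _ => by simp)).symm

lemma prod_fib {S : Type*} [Fintype S] {n : ℕ} {R : Type*} [CommMonoid R] (v : S → Fin n)
    (y : Fin n → R) : ∏ s, y (v s) = ∏ x, y x ^ fib v x := by
  unfold fib
  rw [← Finset.prod_fiberwise_of_maps_to (s := univ) (t := univ) (g := v) (fun _ _ => by simp)]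
  apply Finset.prod_congr rfl
  intro x _
  rw [Finset.prod_congr rfl (g := fun _ => y x), Finset.prod_const]
  intro s hs
  rw [(Finset.mem_filter.mp hs).2]

/-- Number of functions with prescribed fibre sizes. -/
lemma card_fib {S : Type*} [Fintype S] {n : ℕ} (A : Fin n → ℕ) (hA : ∑ x, A x = Fintype.card S) :
    #{v : S → Fin n | fib v = A} = Nat.multinomial univ A := by
  have h1 : (∑ x : Fin n, (MvPolynomial.X x : MvPolynomial (Fin n) ℕ)) ^ (Fintype.card S) =
      ∑ v : S → Fin n, ∏ x, MvPolynomial.X x ^ fib v x := by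
    rw [← Finset.card_univ, ← Finset.prod_const, Finset.prod_univ_sum]
    simp only [Fintype.piFinset_univ]
    exact Finset.sum_congr rfl (fun v _ => prod_fib v _)
  rw [Finset.sum_pow_eq_sum_piAntidiag] at h1
  have hm : ∀ B : Fin n → ℕ, (∏ x, (MvPolynomial.X x : MvPolynomial (Fin n) ℕ) ^ B x) =
      MvPolynomial.monomial (Finsupp.equivFunOnFinite.symm B) 1 := by
    intro B
    rw [MvPolynomial.monomial_eq, Finsupp.prod_fintype _ _ (by simp)]
    simp
  simp_rw [hm] at h1
  have h2 := congrArg (MvPolynomial.coeff (Finsupp.equivFunOnFinite.symm A)) h1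
  simp only [MvPolynomial.coeff_sum, MvPolynomial.coeff_monomial] at h2
  simp only [← map_natCast (MvPolynomial.C (R := ℕ) (σ := Fin n)), MvPolynomial.coeff_C_mul,
    MvPolynomial.coeff_monomial, EmbeddingLike.apply_eq_iff_eq] at h2
  simp only [mul_ite, mul_one, mul_zero] at h2
  rw [Finset.sum_ite_eq' , if_pos (by simp [hA]), Finset.sum_boole] at h2
  simpa using h2.symm

lemma sum_fib_le {S : Type*} [Fintype S] {n : ℕ} (z : ℝ) (hz : 0 ≤ z) (H : (Fin n → ℕ) → ℝ)
    (hH : ∀ A, 0 ≤ H A) :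
    z ^ (Fintype.card S) * ∑ v : S → Fin n, H (fib v) ≤
      ((Fintype.card S).factorial : ℝ) *
        ∑ A ∈ Fintype.piFinset (fun _ : Fin n => range (Fintype.card S + 1)),
          (∏ x, z ^ A x / ((A x).factorial : ℝ)) * H A := by
  have hmaps : ∀ v ∈ (univ : Finset (S → Fin n)), fib v ∈
      Fintype.piFinset (fun _ : Fin n => range (Fintype.card S + 1)) := by
    intro v _
    rw [Fintype.mem_piFinset]
    intro x
    rw [Finset.mem_range]
    have := fib_le v x
    omega
  rw [← Finset.sum_fiberwise_of_maps_to hmaps, Finset.mul_sum, Finset.mul_sum]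
  apply Finset.sum_le_sum
  intro A _
  have h1 : ∑ v : S → Fin n with fib v = A, H (fib v) = #{v : S → Fin n | fib v = A} * H A := by
    rw [Finset.sum_congr rfl (g := fun _ => H A), Finset.sum_const, nsmul_eq_mul]
    intro v hv
    rw [(Finset.mem_filter.mp hv).2]
  rw [h1]
  by_cases hA : ∑ x, A x = Fintype.card S
  · rw [card_fib A hA, Finset.prod_div_distrib, Finset.prod_pow_eq_pow_sum, hA]
    have h2 := Nat.multinomial_spec univ A
    rw [hA] at h2
    rw [← h2]
    have h3 : (∏ x, ((A x).factorial : ℝ)) ≠ 0 := by positivity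
    push_cast
    apply le_of_eq
    field_simp
  · have h4 : #{v : S → Fin n | fib v = A} = 0 := by
      rw [Finset.card_eq_zero, Finset.filter_eq_empty_iff]
      intro v _ hv
      apply hA
      rw [← hv, fib_sum]
    rw [h4]
    simp only [Nat.cast_zero, zero_mul, mul_zero]
    have := hH A
    positivity

lemma factorial_exp_le_aux (T : ℕ) (hT : 1 ≤ T) :
    (T.factorial : ℝ) * Real.exp T ≤ Real.exp 1 * T * (T : ℝ) ^ T := by
  induction T, hT using Nat.le_induction with
  | base => simp
  | succ T hT ih =>
    have hT' : (0 : ℝ) < T := by exact_mod_cast hT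
    have h1 : Real.exp 1 * (T : ℝ) ^ (T + 1) ≤ ((T : ℝ) + 1) ^ (T + 1) := by
      have h2 : Real.exp (1 / ((T : ℝ) + 1)) * T ≤ T + 1 := by
        have := Real.one_sub_inv_le_log_of_pos (x := ((T : ℝ) + 1) / T) (by positivity)
        have h3 : 1 / ((T : ℝ) + 1) ≤ Real.log (((T : ℝ) + 1) / T) := by
          refine le_trans (le_of_eq ?_) this
          field_simp
          ring
        have h4 := (Real.le_log_iff_exp_le (by positivity)).mp h3
        rwa [le_div_iff₀ hT'] at h4
      have h5 := pow_le_pow_left₀ (by positivity) h2 (T + 1)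
      rw [mul_pow, ← Real.exp_nat_mul] at h5
      have h6 : ((T + 1 : ℕ) : ℝ) * (1 / ((T : ℝ) + 1)) = 1 := by
        push_cast; field_simp
      rwa [h6] at h5
    rw [Nat.factorial_succ]
    push_cast
    rw [Real.exp_add]
    calc ((T : ℝ) + 1) * T.factorial * (Real.exp T * Real.exp 1)
        = (T + 1) * Real.exp 1 * (T.factorial * Real.exp T) := by ring
      _ ≤ (T + 1) * Real.exp 1 * (Real.exp 1 * T * (T : ℝ) ^ T) := by gcongr
      _ = Real.exp 1 * (T + 1) * (Real.exp 1 * (T : ℝ) ^ (T + 1)) := by ring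
      _ ≤ Real.exp 1 * (T + 1) * ((T : ℝ) + 1) ^ (T + 1) := by gcongr

lemma factorial_exp_le (T : ℕ) :
    (T.factorial : ℝ) * Real.exp T ≤ Real.exp 1 * (T + 1) * (T : ℝ) ^ T := by
  rcases Nat.eq_zero_or_pos T with rfl | hT
  · simp
  · refine (factorial_exp_le_aux T hT).trans ?_
    gcongr
    linarith

/-- `wr s a b`: a variable with planted value `s`, occurring `a` times in true and `b` times in
false literals, is set wrongly by the majority vote. -/
def wr (s : Bool) (a b : ℕ) : Prop := if s then a ≤ b else a < b

lemma sum_wr (γ : ℝ) (a b : ℕ) :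
    ∑ s : Bool, Real.exp (γ * (if wr s a b then 1 else -1)) =
      2 * (Real.cosh γ - sg a b * Real.sinh γ) := by
  rw [Fintype.sum_bool, Real.cosh_eq, Real.sinh_eq]
  unfold wr sg
  rcases lt_trichotomy a b with h | h | h
  · have h1 : ¬ b < a := by omega
    simp [h, h.le, h1]; ring
  · subst h
    simp; ring
  · have h1 : ¬ a < b := by omega
    have h2 : ¬ a ≤ b := by omega
    simp [h, h1, h2]; ring

lemma sum_two_fib {S₁ S₂ : Type*} [Fintype S₁] [Fintype S₂] {n : ℕ} (hn : 0 < n) (M : ℝ)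
    (g : ℕ → ℕ → ℝ) (hg : ∀ a b, 0 ≤ g a b) 
    (hM : ∑ a ∈ range (Fintype.card S₁ + 1), ∑ b ∈ range (Fintype.card S₂ + 1),
      ((Fintype.card S₁ / n : ℝ) ^ a / (a.factorial : ℝ)) *
      ((Fintype.card S₂ / n : ℝ) ^ b / (b.factorial : ℝ)) * g a b ≤
        Real.exp (Fintype.card S₁ / n + Fintype.card S₂ / n) * M) :
    ∑ v₁ : S₁ → Fin n, ∑ v₂ : S₂ → Fin n, ∏ x, g (fib v₁ x) (fib v₂ x) ≤
      (n : ℝ) ^ (Fintype.card S₁ + Fintype.card S₂) *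
      (Real.exp 2 * (Fintype.card S₁ + 1) * (Fintype.card S₂ + 1)) * M ^ n := by
  set T := Fintype.card S₁ with hT
  set F := Fintype.card S₂ with hF
  have hn' : (0 : ℝ) < n := by exact_mod_cast hn
  set z : ℝ := T / n with hz
  set w : ℝ := F / n with hw
  have hz0 : 0 ≤ z := by positivity
  have hw0 : 0 ≤ w := by positivity
  set X := ∑ v₁ : S₁ → Fin n, ∑ v₂ : S₂ → Fin n, ∏ x, g (fib v₁ x) (fib v₂ x) with hX
  have h1 : w ^ F * (z ^ T * X) ≤ (F.factorial : ℝ) * (T.factorial *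
      (∑ a ∈ range (T + 1), ∑ b ∈ range (F + 1), (z ^ a / (a.factorial : ℝ)) *
      (w ^ b / (b.factorial : ℝ)) * g a b) ^ n) := by
    have e1 := sum_fib_le (S := S₁) (n := n) z hz0
      (fun A => ∑ v₂ : S₂ → Fin n, ∏ x, g (A x) (fib v₂ x))
      (fun A => Finset.sum_nonneg fun _ _ => Finset.prod_nonneg fun _ _ => hg _ _)
    rw [← hT] at e1
    have e2 := mul_le_mul_of_nonneg_left e1 (pow_nonneg hw0 F)
    refine e2.trans ?_
    have e3 : ∀ A : Fin n → ℕ, w ^ F * ∑ v₂ : S₂ → Fin n, ∏ x, g (A x) (fib v₂ x) ≤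
        F.factorial * ∑ B ∈ Fintype.piFinset (fun _ : Fin n => range (F + 1)),
          (∏ x, w ^ B x / ((B x).factorial : ℝ)) * ∏ x, g (A x) (B x) := by
      intro A
      exact sum_fib_le (S := S₂) (n := n) w hw0 (fun B => ∏ x, g (A x) (B x))
        (fun B => Finset.prod_nonneg fun _ _ => hg _ _)
    calc _ = (T.factorial : ℝ) * ∑ A ∈ Fintype.piFinset (fun _ : Fin n => range (T + 1)),
          (∏ x, z ^ A x / ((A x).factorial : ℝ)) *
            (w ^ F * ∑ v₂ : S₂ → Fin n, ∏ x, g (A x) (fib v₂ x)) := by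
          rw [Finset.mul_sum, Finset.mul_sum, Finset.mul_sum]
          exact Finset.sum_congr rfl fun A _ => by ring
      _ ≤ (T.factorial : ℝ) * ∑ A ∈ Fintype.piFinset (fun _ : Fin n => range (T + 1)),
          (∏ x, z ^ A x / ((A x).factorial : ℝ)) *
            (F.factorial * ∑ B ∈ Fintype.piFinset (fun _ : Fin n => range (F + 1)),
          (∏ x, w ^ B x / ((B x).factorial : ℝ)) * ∏ x, g (A x) (B x)) := by
          refine mul_le_mul_of_nonneg_left (Finset.sum_le_sum fun A _ => ?_) (by positivity)
          exact mul_le_mul_of_nonneg_left (e3 A) (Finset.prod_nonneg fun _ _ => by positivity)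
      _ = (F.factorial : ℝ) * (T.factorial *
            ∑ A ∈ Fintype.piFinset (fun _ : Fin n => range (T + 1)),
            ∏ x, ∑ b ∈ range (F + 1), (z ^ A x / ((A x).factorial : ℝ)) *
              (w ^ b / (b.factorial : ℝ)) * g (A x) b) := by
          rw [Finset.mul_sum, Finset.mul_sum, Finset.mul_sum]
          refine Finset.sum_congr rfl fun A _ => ?_
          rw [Finset.prod_univ_sum, Finset.mul_sum, Finset.mul_sum, Finset.mul_sum, Finset.mul_sum,
            Finset.mul_sum]
          refine Finset.sum_congr rfl fun B _ => ?_
          rw [Finset.prod_mul_distrib, Finset.prod_mul_distrib]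
          ring
      _ = _ := by
          rw [← Finset.prod_univ_sum (fun _ : Fin n => range (T + 1))
            (fun _ a => ∑ b ∈ range (F + 1), (z ^ a / (a.factorial : ℝ)) *
              (w ^ b / (b.factorial : ℝ)) * g a b)]
          rw [Finset.prod_const, Finset.card_univ, Fintype.card_fin]
  have hsum0 : 0 ≤ ∑ a ∈ range (T + 1), ∑ b ∈ range (F + 1), (z ^ a / (a.factorial : ℝ)) *
      (w ^ b / (b.factorial : ℝ)) * g a b :=
    Finset.sum_nonneg fun a _ => Finset.sum_nonneg fun b _ => by
      have := hg a b; positivity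
  have hM0 : 0 ≤ M := by
    by_contra h
    have := mul_neg_of_pos_of_neg (Real.exp_pos (z + w)) (not_le.mp h)
    linarith
  have h2 := pow_le_pow_left₀ hsum0 hM n
  rw [mul_pow, ← Real.exp_nat_mul] at h2
  have h3 : (n : ℝ) * (z + w) = T + F := by rw [hz, hw]; field_simp
  rw [h3, Real.exp_add] at h2
  have hTp : (0 : ℝ) < (T : ℝ) ^ T := by
    rcases Nat.eq_zero_or_pos T with h | h
    · rw [h]; simp
    · have : (0 : ℝ) < T := by exact_mod_cast h
      positivity
  have hFp : (0 : ℝ) < (F : ℝ) ^ F := by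
    rcases Nat.eq_zero_or_pos F with h | h
    · rw [h]; simp
    · have : (0 : ℝ) < F := by exact_mod_cast h
      positivity
  have h4 : w ^ F * (z ^ T * X) * (n : ℝ) ^ (T + F) = (T : ℝ) ^ T * (F : ℝ) ^ F * X := by
    rw [hz, hw, div_pow, div_pow, pow_add]; field_simp
  have hT1 := factorial_exp_le T
  have hF1 := factorial_exp_le F
  have h5 : w ^ F * (z ^ T * X) ≤ (Real.exp 1 * (T + 1) * (T : ℝ) ^ T) *
      (Real.exp 1 * (F + 1) * (F : ℝ) ^ F) * M ^ n := by
    calc _ ≤ _ := h1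
      _ ≤ (F.factorial : ℝ) * (T.factorial * (Real.exp T * Real.exp F * M ^ n)) := by gcongr
      _ = (T.factorial * Real.exp T) * (F.factorial * Real.exp F) * M ^ n := by ring
      _ ≤ _ := by gcongr
  have h6 := mul_le_mul_of_nonneg_right h5 (by positivity : (0 : ℝ) ≤ (n : ℝ) ^ (T + F))
  rw [h4] at h6
  have h7 : Real.exp 2 = Real.exp 1 * Real.exp 1 := by rw [← Real.exp_add]; norm_num
  rw [h7]
  refine le_of_mul_le_mul_left ?_ (mul_pos hTp hFp)
  refine h6.trans (le_of_eq ?_)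
  ring

/-- Number of slots of sign `t` holding the variable `x`. -/
def cnt {S : Type*} [Fintype S] {n : ℕ} (τ : S → Bool) (t : Bool) (v : S → Fin n) (x : Fin n) : ℕ :=
  #{p | τ p = t ∧ v p = x}

lemma key {S : Type*} [Fintype S] {n : ℕ} (hn : 0 < n) (τ : S → Bool) (L γ : ℝ) (hL : 0 < L)
    (hγ0 : 0 ≤ γ) (hγ : γ ≤ 1 / (16 * (2 * L + 1)))
    (hTF : #{p | τ p = false} + n ≤ #{p | τ p = true})
    (hF : 2 * (#{p | τ p = false} : ℝ) ≤ L ^ 2 * n) :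
    (#{q : (S → Fin n) × (Fin n → Bool) | (1 / 2 - γ / 4) * n <
      (#{x | wr (q.2 x) (cnt τ true q.1 x) (cnt τ false q.1 x)} : ℝ)} : ℝ) ≤
    2 ^ n * (n : ℝ) ^ (Fintype.card S) * (Real.exp 2 * (Fintype.card S + 1) ^ 2) *
      Real.exp (- γ ^ 2 / 2 * n) := by
  have hn' : (0 : ℝ) < n := by exact_mod_cast hn
  set g : ℕ → ℕ → ℝ := fun a b => Real.cosh γ - sg a b * Real.sinh γ with hg
  have hg0 : ∀ a b, 0 ≤ g a b := by
    intro a b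
    have hsinh : 0 ≤ Real.sinh γ := Real.sinh_nonneg_iff.mpr hγ0
    have h1 := (abs_le.mp (sg_abs a b)).2
    have h2 := Real.sinh_lt_cosh γ
    simp only [hg]
    nlinarith
  have hpt : ∀ (v : S → Fin n) (σ : Fin n → Bool), 
      (if (1 / 2 - γ / 4) * n < (#{x | wr (σ x) (cnt τ true v x) (cnt τ false v x)} : ℝ)
        then (1 : ℝ) else 0) ≤ Real.exp (γ ^ 2 / 2 * n) * 
        ∏ x, Real.exp (γ * (if wr (σ x) (cnt τ true v x) (cnt τ false v x) then 1 else -1)) := by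
    intro v σ
    split_ifs with h
    · rw [← Real.exp_sum, ← Real.exp_add]
      apply Real.one_le_exp
      have h1 : ∀ x, (if wr (σ x) (cnt τ true v x) (cnt τ false v x) then (1 : ℝ) else -1) =
          2 * (if wr (σ x) (cnt τ true v x) (cnt τ false v x) then (1 : ℝ) else 0) - 1 := by
        intro x; split_ifs <;> norm_num
      simp_rw [h1]
      rw [← Finset.mul_sum, Finset.sum_sub_distrib, ← Finset.mul_sum, Finset.sum_boole]
      simp only [Finset.sum_const, Finset.card_univ, Fintype.card_fin, nsmul_eq_mul, mul_one]
      nlinarith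
    · positivity
  have hcard : (#{q : (S → Fin n) × (Fin n → Bool) | (1 / 2 - γ / 4) * n <
      (#{x | wr (q.2 x) (cnt τ true q.1 x) (cnt τ false q.1 x)} : ℝ)} : ℝ) ≤
      Real.exp (γ ^ 2 / 2 * n) * (2 ^ n *
        ∑ v : S → Fin n, ∏ x, g (cnt τ true v x) (cnt τ false v x)) := by
    rw [← Finset.sum_boole, Fintype.sum_prod_type, Finset.mul_sum, Finset.mul_sum]
    apply Finset.sum_le_sum
    intro v _
    calc _ ≤ ∑ σ : Fin n → Bool, Real.exp (γ ^ 2 / 2 * n) * 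
        ∏ x, Real.exp (γ * (if wr (σ x) (cnt τ true v x) (cnt τ false v x) then 1 else -1)) :=
          Finset.sum_le_sum fun σ _ => hpt v σ
      _ = _ := by
        rw [← Finset.mul_sum]
        congr 1
        have := Finset.prod_univ_sum (fun _ : Fin n => (univ : Finset Bool)) (fun x s =>
          Real.exp (γ * (if wr s (cnt τ true v x) (cnt τ false v x) then 1 else -1)))
        rw [Fintype.piFinset_univ] at this
        rw [← this]
        simp_rw [sum_wr]
        rw [Finset.prod_mul_distrib]
        simp [hg]
  -- split the slots
  set T := Fintype.card {p // τ p = true} with hTdef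
  set F := Fintype.card {p // ¬ τ p = true} with hFdef
  have hT2 : #{p | τ p = true} = T := by rw [hTdef, Fintype.card_subtype]
  have hF2 : #{p | τ p = false} = F := by
    rw [hFdef, Fintype.card_subtype]; simp
  rw [hT2, hF2] at hTF
  rw [hF2] at hF
  have hTFS : T + F = Fintype.card S := by
    rw [hTdef, hFdef, Fintype.card_subtype_compl]
    have := Fintype.card_subtype_le (fun p => τ p = true)
    omega
  have hsplit : ∑ v : S → Fin n, ∏ x, g (cnt τ true v x) (cnt τ false v x) =
      ∑ v₁ : {p // τ p = true} → Fin n, ∑ v₂ : {p // ¬ τ p = true} → Fin n,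
        ∏ x, g (fib v₁ x) (fib v₂ x) := by
    rw [← Fintype.sum_prod_type']
    refine Fintype.sum_equiv (Equiv.piEquivPiSubtypeProd (fun p => τ p = true) (fun _ => Fin n))
      _ _ fun v => ?_
    refine Finset.prod_congr rfl fun x _ => ?_
    have e1 : cnt τ true v x = fib (fun p : {p // τ p = true} => v p) x := by
      unfold cnt fib
      rw [← Fintype.card_subtype, ← Fintype.card_subtype]
      exact Fintype.card_congr (Equiv.subtypeSubtypeEquivSubtypeInter _ _).symm
    have e2 : cnt τ false v x = fib (fun p : {p // ¬ τ p = true} => v p) x := by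
      unfold cnt fib
      rw [← Fintype.card_subtype, ← Fintype.card_subtype]
      simp_rw [← Bool.not_eq_true]
      exact Fintype.card_congr
        (Equiv.subtypeSubtypeEquivSubtypeInter (fun p => ¬ τ p = true) (fun p => v p = x)).symm
    rw [e1, e2]
    rfl
  have hmgf := poisson_mgf ((T : ℝ) / n) ((F : ℝ) / n) (by positivity) (by
      have : (F : ℝ) + n ≤ T := by exact_mod_cast hTF
      rw [le_div_iff₀ hn', add_mul, div_mul_cancel₀ _ hn'.ne']; linarith) L hL (by
      rw [mul_div_assoc', div_le_iff₀ hn']; exact hF) γ hγ0 hγ T F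
  have htwo := sum_two_fib (S₁ := {p // τ p = true}) (S₂ := {p // ¬ τ p = true}) hn
    (Real.exp (-γ ^ 2)) g hg0 hmgf
  have htwo : ∑ v : S → Fin n, ∏ x, g (cnt τ true v x) (cnt τ false v x) ≤
      (n : ℝ) ^ (T + F) * (Real.exp 2 * (T + 1) * (F + 1)) * Real.exp (-γ ^ 2) ^ n := by
    refine le_trans (le_of_eq ?_) htwo
    rw [hsplit]
    congr!
  rw [hTFS] at htwo
  refine hcard.trans ?_
  have hTS : (T : ℝ) ≤ Fintype.card S := by exact_mod_cast (by omega : T ≤ Fintype.card S)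
  have hFS : (F : ℝ) ≤ Fintype.card S := by exact_mod_cast (by omega : F ≤ Fintype.card S)
  calc _ ≤ Real.exp (γ ^ 2 / 2 * n) * (2 ^ n * ((n : ℝ) ^ (Fintype.card S) *
      (Real.exp 2 * (T + 1) * (F + 1)) * Real.exp (-γ ^ 2) ^ n)) := by gcongr
    _ ≤ Real.exp (γ ^ 2 / 2 * n) * (2 ^ n * ((n : ℝ) ^ (Fintype.card S) *
      (Real.exp 2 * (Fintype.card S + 1) * (Fintype.card S + 1)) * Real.exp (-γ ^ 2) ^ n)) := by
        gcongr
    _ = _ := by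
      have : Real.exp (- γ ^ 2 / 2 * n) = Real.exp (γ ^ 2 / 2 * n) * Real.exp (-γ ^ 2) ^ n := by
        rw [← Real.exp_nat_mul, ← Real.exp_add]; congr 1; ring
      rw [this]; ring

end CountingPart

section PatternPart

/-- Every clause contains a true literal. -/
def okPat {m k : ℕ} (τ : Fin m → Fin k → Bool) : Prop := ∀ i, ∃ j, τ i j = true

lemma filter_ok_clause (k : ℕ) :
    (univ.filter fun c : Fin k → Bool => ∃ j, c j = true) = univ.erase (fun _ => false) := by
  ext c
  simp only [Finset.mem_filter, Finset.mem_univ, true_and, Finset.mem_erase, and_true, ne_eq,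
    funext_iff, not_forall, Bool.not_eq_false]

lemma filter_okPat (m k : ℕ) :
    (univ.filter fun τ : Fin m → Fin k → Bool => okPat τ) =
      Fintype.piFinset (fun _ : Fin m => univ.filter fun c : Fin k → Bool => ∃ j, c j = true) := by
  ext τ
  simp only [Finset.mem_filter, Finset.mem_univ, true_and, Fintype.mem_piFinset]
  exact Iff.rfl

lemma card_okPat (m k : ℕ) :
    (#{τ : Fin m → Fin k → Bool | okPat τ} : ℝ) = ((2 : ℝ) ^ k - 1) ^ m := by
  rw [filter_okPat, Fintype.card_piFinset, filter_ok_clause, Finset.prod_const,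
    Finset.card_erase_of_mem (Finset.mem_univ _)]
  simp only [Finset.card_univ, Fintype.card_fun, Fintype.card_bool, Fintype.card_fin]
  rw [Nat.cast_pow, Nat.cast_sub Nat.one_le_two_pow]
  simp

lemma clause_mgf (k : ℕ) (hk : 1 ≤ k) (l : ℝ) (hl : l = 1 / (4 * 2 ^ k)) :
    ∑ c ∈ univ.filter (fun c : Fin k → Bool => ∃ j, c j = true),
      ∏ j, Real.exp (-l * (if c j = true then 1 else -1)) ≤
      ((2 : ℝ) ^ k - 1) * Real.exp (-(3 / 4 * l * k / 2 ^ k)) := by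
  have hk2 : (2 : ℝ) ≤ 2 ^ k := by
    calc (2 : ℝ) = 2 ^ 1 := by norm_num
      _ ≤ 2 ^ k := pow_le_pow_right₀ (by norm_num) hk
  have hl0 : 0 < l := by rw [hl]; positivity
  have hl2 : 2 ^ k * l = 1 / 4 := by rw [hl]; field_simp
  have hkk : (k : ℝ) ≤ 2 ^ k := by exact_mod_cast (Nat.lt_two_pow_self (n := k)).le
  have hkl : k * l ≤ 1 / 4 := by rw [← hl2]; gcongr
  have hlle : l ≤ 1 / 8 := by nlinarith
  rw [filter_ok_clause]
  have h1 : ∑ c : Fin k → Bool, ∏ j, Real.exp (-l * (if c j = true then 1 else -1)) =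
      (2 * Real.cosh l) ^ k := by
    have := Finset.prod_univ_sum (fun _ : Fin k => (univ : Finset Bool)) (fun _ s =>
          Real.exp (-l * (if s = true then 1 else -1)))
    rw [Fintype.piFinset_univ] at this
    rw [← this]
    simp only [Fintype.sum_bool, Finset.prod_const, Finset.card_univ, Fintype.card_fin]
    rw [Real.cosh_eq]
    congr 1
    simp
    ring
  rw [← Finset.sum_erase_add _ _ (Finset.mem_univ (fun _ : Fin k => false))] at h1
  have h2 : ∏ j : Fin k, Real.exp (-l * (if (fun _ : Fin k => false) j = true then 1 else -1)) =
      Real.exp (k * l) := by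
    simp [Real.exp_nat_mul]
  rw [h2] at h1
  have h3 : (2 * Real.cosh l) ^ k ≤ 2 ^ k * (1 + k * l ^ 2) := by
    rw [mul_pow]
    gcongr
    calc Real.cosh l ^ k ≤ Real.exp (l ^ 2 / 2) ^ k := by
          gcongr
          · exact Real.cosh_le_exp_half_sq l
      _ = Real.exp (k * (l ^ 2 / 2)) := by rw [← Real.exp_nat_mul]
      _ ≤ 1 + k * l ^ 2 := by
        have hx : 0 ≤ k * (l ^ 2 / 2) := by positivity
        have hx1 : k * (l ^ 2 / 2) ≤ 1 := by nlinarith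
        have h := Real.abs_exp_sub_one_sub_id_le (x := k * (l ^ 2 / 2)) (by
          rw [abs_of_nonneg hx]; exact hx1)
        have h' := (abs_le.mp h).2
        nlinarith
  have h4 := Real.add_one_le_exp (k * l)
  have h5 := Real.add_one_le_exp (-(3 / 4 * l * k / 2 ^ k))
  have h6 : ((2 : ℝ) ^ k - 1) * (-(3 / 4 * l * k / 2 ^ k) + 1) ≤
      ((2 : ℝ) ^ k - 1) * Real.exp (-(3 / 4 * l * k / 2 ^ k)) := by
    apply mul_le_mul_of_nonneg_left h5; linarith
  have h7 : (2 : ℝ) ^ k * (3 / 4 * l * k / 2 ^ k) = 3 / 4 * l * k := by field_simp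
  have h8 : 0 ≤ 3 / 4 * l * k / 2 ^ k := by positivity
  have h9 : (2 : ℝ) ^ k * (k * l ^ 2) = 1 / 4 * (k * l) := by rw [← hl2]; ring
  nlinarith

lemma pattern_tail (m k n : ℕ) (hk : 1 ≤ k) (l : ℝ) (hl : l = 1 / (4 * 2 ^ k)) :
    (#{τ : Fin m → Fin k → Bool | okPat τ ∧
      ¬ (#{p : Fin m × Fin k | τ p.1 p.2 = false} + n ≤
        #{p : Fin m × Fin k | τ p.1 p.2 = true})} : ℝ) ≤
      ((2 : ℝ) ^ k - 1) ^ m * Real.exp (l * n - 3 / 4 * l * k / 2 ^ k * m) := by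
  have hl0 : 0 < l := by rw [hl]; positivity
  have hpt : ∀ τ : Fin m → Fin k → Bool,
      (if ¬ (#{p : Fin m × Fin k | τ p.1 p.2 = false} + n ≤
        #{p : Fin m × Fin k | τ p.1 p.2 = true}) then (1 : ℝ) else 0) ≤
      Real.exp (l * n) * ∏ i, ∏ j, Real.exp (-l * (if τ i j = true then 1 else -1)) := by
    intro τ
    split_ifs with h
    · positivity
    · simp_rw [← Real.exp_sum]
      rw [← Real.exp_add]
      apply Real.one_le_exp
      have h1 : ∑ i, ∑ j, (-l * (if τ i j = true then (1 : ℝ) else -1)) =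
          -l * (#{p : Fin m × Fin k | τ p.1 p.2 = true} -
            #{p : Fin m × Fin k | τ p.1 p.2 = false}) := by
        rw [← Finset.sum_boole, ← Finset.sum_boole, ← Finset.sum_sub_distrib, Finset.mul_sum,
          Fintype.sum_prod_type]
        refine Finset.sum_congr rfl fun i _ => Finset.sum_congr rfl fun j _ => ?_
        cases τ i j <;> simp
      rw [h1]
      have h2 : (#{p : Fin m × Fin k | τ p.1 p.2 = true} : ℝ) ≤
          #{p : Fin m × Fin k | τ p.1 p.2 = false} + n := by
        exact_mod_cast (not_le.mp h).le
      nlinarith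
  rw [← Finset.filter_filter, ← Finset.sum_boole]
  calc _ ≤ ∑ τ : Fin m → Fin k → Bool with okPat τ, Real.exp (l * n) *
        ∏ i, ∏ j, Real.exp (-l * (if τ i j = true then 1 else -1)) :=
        Finset.sum_le_sum fun τ _ => hpt τ
    _ = Real.exp (l * n) * (∑ c ∈ univ.filter (fun c : Fin k → Bool => ∃ j, c j = true),
      ∏ j, Real.exp (-l * (if c j = true then 1 else -1))) ^ m := by
        rw [← Finset.mul_sum, filter_okPat]
        congr 1
        rw [← Finset.prod_univ_sum (fun _ : Fin m => 
          univ.filter (fun c : Fin k → Bool => ∃ j, c j = true)) (fun _ c => 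
            ∏ j, Real.exp (-l * (if c j = true then 1 else -1)))]
        simp
    _ ≤ Real.exp (l * n) * (((2 : ℝ) ^ k - 1) * Real.exp (-(3 / 4 * l * k / 2 ^ k))) ^ m := by
        gcongr
        exact clause_mgf k hk l hl
    _ = _ := by
        rw [mul_pow, ← Real.exp_nat_mul, sub_eq_add_neg (l * n), Real.exp_add]
        rw [show (m : ℝ) * -(3 / 4 * l * k / 2 ^ k) = -(3 / 4 * l * k / 2 ^ k * m) by ring]
        ring

end PatternPart

section Bridge

/-- Decomposition of a formula/assignment pair: truth pattern, variables, assignment. -/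
def decomp (n k m : ℕ) : Formula n k m × Assignment n ≃
    (Fin m → Fin k → Bool) × ((Fin m × Fin k → Fin n) × (Fin n → Bool)) where
  toFun q := (fun i j => litVal q.2 (q.1 i j), (fun p => (q.1 p.1 p.2).1, q.2))
  invFun q := (fun i j => (q.2.1 (i, j), q.1 i j == q.2.2 (q.2.1 (i, j))), q.2.2)
  left_inv q := by
    obtain ⟨Φ, σ⟩ := q
    refine Prod.ext ?_ rfl
    funext i j
    refine Prod.ext rfl ?_
    simp only [litVal]
    cases (Φ i j).2 <;> cases σ (Φ i j).1 <;> rfl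
  right_inv q := by
    obtain ⟨τ, v, σ⟩ := q
    refine Prod.ext ?_ rfl
    funext i j
    simp only [litVal]
    cases τ i j <;> cases σ (v (i, j)) <;> rfl

lemma cnt_eq_occ {n k m : ℕ} (Φ : Formula n k m) (σ : Assignment n) (t : Bool) (x : Fin n) :
    cnt (fun p : Fin m × Fin k => litVal σ (Φ p.1 p.2)) t (fun p => (Φ p.1 p.2).1) x =
      occ n k m Φ (x, t == σ x) := by
  unfold cnt occ
  congr 1
  ext p
  simp only [Finset.mem_filter, Finset.mem_univ, true_and]
  unfold litVal
  generalize Φ p.1 p.2 = q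
  obtain ⟨y, b⟩ := q
  simp only [Prod.mk.injEq]
  constructor
  · rintro ⟨h1, rfl⟩
    refine ⟨rfl, ?_⟩
    rw [← h1]
    cases b <;> cases σ y <;> rfl
  · rintro ⟨rfl, rfl⟩
    refine ⟨?_, rfl⟩
    cases t <;> cases σ y <;> rfl

/-- Number of variables set wrongly by the majority vote. -/
def nwr {S : Type*} [Fintype S] {n : ℕ} (τ : S → Bool) (v : S → Fin n) (σ : Fin n → Bool) : ℕ :=
  #{x | wr (σ x) (cnt τ true v x) (cnt τ false v x)}

/-- Number of pairs (variables, assignment) with more than `c` wrong variables. -/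
def badCnt {S : Type*} [Fintype S] (n : ℕ) (τ : S → Bool) (c : ℝ) : ℕ :=
  #{q : (S → Fin n) × (Fin n → Bool) | c < (nwr τ q.1 q.2 : ℝ)}

lemma badCnt_le {S : Type*} [Fintype S] (n : ℕ) (τ : S → Bool) (c : ℝ) :
    (badCnt n τ c : ℝ) ≤ 2 ^ n * (n : ℝ) ^ (Fintype.card S) := by
  have h1 : badCnt n τ c ≤ Fintype.card ((S → Fin n) × (Fin n → Bool)) := Finset.card_le_univ _
  rw [Fintype.card_prod, Fintype.card_fun, Fintype.card_fun, Fintype.card_fin,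
    Fintype.card_bool] at h1
  rw [mul_comm]
  exact_mod_cast h1

lemma badCnt_key {S : Type*} [Fintype S] {n : ℕ} (hn : 0 < n) (τ : S → Bool) (L γ : ℝ) (hL : 0 < L)
    (hγ0 : 0 ≤ γ) (hγ : γ ≤ 1 / (16 * (2 * L + 1)))
    (hTF : #{p | τ p = false} + n ≤ #{p | τ p = true})
    (hF : 2 * (#{p | τ p = false} : ℝ) ≤ L ^ 2 * n) :
    (badCnt n τ ((1 / 2 - γ / 4) * n) : ℝ) ≤
    2 ^ n * (n : ℝ) ^ (Fintype.card S) * (Real.exp 2 * (Fintype.card S + 1) ^ 2) *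
      Real.exp (- γ ^ 2 / 2 * n) := by
  unfold badCnt nwr
  exact key hn τ L γ hL hγ0 hγ hTF hF

lemma hdist_eq {n k m : ℕ} (Φ : Formula n k m) (σ : Assignment n) :
    hdist σ (sigmaMaj n k m Φ) =
      nwr (fun p : Fin m × Fin k => litVal σ (Φ p.1 p.2)) (fun p => (Φ p.1 p.2).1) σ := by
  unfold hdist nwr
  congr 1
  ext x
  rw [Finset.mem_filter, Finset.mem_filter]
  simp only [Finset.mem_univ, true_and, cnt_eq_occ]
  unfold sigmaMaj wr
  cases h : σ x <;> simp

lemma card_planted (n k m : ℕ) :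
    ((Planted n k m).card : ℝ) = ((2 : ℝ) ^ k - 1) ^ m * (2 ^ n * (n : ℝ) ^ (m * k)) := by
  have h : (Planted n k m).card = #((univ.filter fun τ : Fin m → Fin k → Bool => okPat τ) ×ˢ
      (univ : Finset ((Fin m × Fin k → Fin n) × (Fin n → Bool)))) := by
    apply Finset.card_equiv (decomp n k m)
    rintro ⟨Φ, σ⟩
    unfold Planted
    rw [Finset.mem_filter, Finset.mem_product, Finset.mem_filter]
    simp only [Finset.mem_univ, true_and, and_true]
    exact Iff.rfl
  rw [h, Finset.card_product, Nat.cast_mul, card_okPat, Finset.card_univ, Fintype.card_prod,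
    Fintype.card_fun, Fintype.card_fun, Fintype.card_prod, Fintype.card_fin, Fintype.card_fin,
    Fintype.card_fin, Fintype.card_bool]
  push_cast
  ring

lemma card_bad (n k m : ℕ) (c : ℝ) :
    (((Planted n k m).filter fun p : Formula n k m × Assignment n =>
              c < (hdist p.2 (sigmaMaj n k m p.1) : ℝ)).card : ℝ) =
    ∑ τ : Fin m → Fin k → Bool with okPat τ,
      (badCnt n (fun p : Fin m × Fin k => τ p.1 p.2) c : ℝ) := by
  unfold badCnt
  rw [← Nat.cast_sum, ← Finset.card_sigma]
  congr 1
  apply Finset.card_equiv ((decomp n k m).trans (Equiv.sigmaEquivProd _ _).symm)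
  rintro ⟨Φ, σ⟩
  unfold Planted
  rw [Finset.mem_filter, Finset.mem_filter, Finset.mem_sigma, Finset.mem_filter, Finset.mem_filter]
  simp only [Finset.mem_univ, true_and, hdist_eq]
  exact Iff.rfl

lemma ratio_bound (n k m : ℕ) (hn : 0 < n) (hk : 1 ≤ k) (l : ℝ) (hl : l = 1 / (4 * 2 ^ k))
    (L γ : ℝ) (hL : 0 < L) (hγ0 : 0 ≤ γ) (hγ : γ ≤ 1 / (16 * (2 * L + 1)))
    (hm : (m : ℝ) * k ≤ L ^ 2 * n) :
    (((Planted n k m).filter fun p : Formula n k m × Assignment n =>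
              (1 / 2 - γ / 4) * n < (hdist p.2 (sigmaMaj n k m p.1) : ℝ)).card : ℝ) /
            ((Planted n k m).card : ℝ) ≤
      Real.exp (l * n - 3 / 4 * l * k / 2 ^ k * m) +
        Real.exp 2 * ((m : ℝ) * k + 1) ^ 2 * Real.exp (- γ ^ 2 / 2 * n) := by
  have hn' : (0 : ℝ) < n := by exact_mod_cast hn
  have hk2 : (2 : ℝ) ≤ 2 ^ k := by
    calc (2 : ℝ) = 2 ^ 1 := by norm_num
      _ ≤ 2 ^ k := pow_le_pow_right₀ (by norm_num) hk
  have hk1 : (0 : ℝ) < 2 ^ k - 1 := by linarith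
  rw [card_planted, div_le_iff₀ (by positivity), card_bad]
  set E := Real.exp 2 * ((m : ℝ) * k + 1) ^ 2 * Real.exp (- γ ^ 2 / 2 * n) with hE
  have hE0 : 0 ≤ E := by positivity
  set Q : ℝ := 2 ^ n * (n : ℝ) ^ (m * k) with hQ
  have hQ0 : 0 ≤ Q := by positivity
  have hcard : Fintype.card (Fin m × Fin k) = m * k := by
    rw [Fintype.card_prod, Fintype.card_fin, Fintype.card_fin]
  have hτ : ∀ τ : Fin m → Fin k → Bool,
      (badCnt n (fun p : Fin m × Fin k => τ p.1 p.2) ((1 / 2 - γ / 4) * n) : ℝ) ≤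
      Q * (if ¬ (#{p : Fin m × Fin k | τ p.1 p.2 = false} + n ≤
        #{p : Fin m × Fin k | τ p.1 p.2 = true}) then (1 : ℝ) else 0) + Q * E := by
    intro τ
    by_cases h : (#{p : Fin m × Fin k | τ p.1 p.2 = false} + n ≤
        #{p : Fin m × Fin k | τ p.1 p.2 = true})
    · rw [if_neg (not_not_intro h), mul_zero, zero_add]
      have hsum : #{p : Fin m × Fin k | τ p.1 p.2 = true} +
          #{p : Fin m × Fin k | τ p.1 p.2 = false} = m * k := by
        have := Finset.card_filter_add_card_filter_not (s := (univ : Finset (Fin m × Fin k)))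
          (fun p => τ p.1 p.2 = true)
        simpa using this
      have hF : 2 * (#{p : Fin m × Fin k | τ p.1 p.2 = false} : ℝ) ≤ L ^ 2 * n := by
        refine le_trans ?_ hm
        have : 2 * #{p : Fin m × Fin k | τ p.1 p.2 = false} ≤ m * k := by omega
        exact_mod_cast this
      have := badCnt_key hn (fun p : Fin m × Fin k => τ p.1 p.2) L γ hL hγ0 hγ h hF
      refine this.trans (le_of_eq ?_)
      rw [hcard, hQ, hE]
      push_cast
      ring
    · rw [if_pos h, mul_one]
      have h1 := badCnt_le n (fun p : Fin m × Fin k => τ p.1 p.2) ((1 / 2 - γ / 4) * n)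
      rw [hcard] at h1
      have : 0 ≤ Q * E := by positivity
      linarith
  refine (Finset.sum_le_sum fun τ _ => hτ τ).trans ?_
  rw [Finset.sum_add_distrib, ← Finset.mul_sum, Finset.sum_boole, Finset.filter_filter,
    Finset.sum_const, nsmul_eq_mul, card_okPat]
  have := mul_le_mul_of_nonneg_left (pattern_tail m k n hk l hl) hQ0
  linarith

end Bridge

section Final

set_option maxHeartbeats 4000000 in
/-- Numeric estimates for the final bound. -/
lemma final_bound (k : ℕ) (hk : 16 ≤ k) (rho : ℝ) (h0 : 0 < rho) (h2 : rho ≤ 2) (L γ κ D r : ℝ)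
    (hL : L = Real.sqrt (k * 2 ^ k)) (hγ : γ = 1 / (16 * (2 * L + 1)))
    (hκ : κ = 2 / (2 ^ k * (k : ℝ) ^ 9))
    (hD : D = 1 + Real.exp 2 * ((k : ℝ) * 2 ^ k + 1) ^ 2)
    (hr : r = 2 ^ k * Real.log 2 - rho)
    (n : ℕ) (hn1 : 1 ≤ n) (hn : 6 * D / κ ^ 3 ≤ n) :
    (((Planted n k ⌊r * (n : ℝ)⌋₊).filter fun p : Formula n k ⌊r * (n : ℝ)⌋₊ × Assignment n =>
              (1 / 2 - γ / 4) * n < (hdist p.2 (sigmaMaj n k ⌊r * (n : ℝ)⌋₊ p.1) : ℝ)).card : ℝ) /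
            ((Planted n k ⌊r * (n : ℝ)⌋₊).card : ℝ) ≤
      Real.exp (-2 * n * r / ((k : ℝ) ^ 9 * 4 ^ k)) := by
  have hk' : (16 : ℝ) ≤ k := by exact_mod_cast hk
  have hn' : (1 : ℝ) ≤ n := by exact_mod_cast hn1
  set P : ℝ := 2 ^ k with hP
  have hP16 : (65536 : ℝ) ≤ P := by
    calc (65536 : ℝ) = 2 ^ 16 := by norm_num
      _ ≤ 2 ^ k := pow_le_pow_right₀ (by norm_num) hk
  have h4 : (4 : ℝ) ^ k = P * P := by
    rw [hP, ← mul_pow]; norm_num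
  have hP0 : 0 < P := by linarith
  have hk0 : (0 : ℝ) < k := by linarith
  have hlog1 := Real.log_two_gt_d9
  have hlog2 := Real.log_two_lt_d9
  have hrlo : P / 2 ≤ r := by rw [hr]; nlinarith
  have hrhi : r ≤ P := by rw [hr]; nlinarith
  have hκ0 : 0 < κ := by rw [hκ]; positivity
  have hmlo : P * n / 4 ≤ (⌊r * (n : ℝ)⌋₊ : ℝ) := by
    have := Nat.lt_floor_add_one (r * (n : ℝ))
    nlinarith
  have hmhi : (⌊r * (n : ℝ)⌋₊ : ℝ) ≤ P * n := by
    have := Nat.floor_le (a := r * (n : ℝ)) (by nlinarith)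
    nlinarith
  generalize ⌊r * (n : ℝ)⌋₊ = m at *
  have hL0 : 0 < L := by rw [hL]; positivity
  have hL2 : L ^ 2 = k * P := by rw [hL, Real.sq_sqrt (by positivity)]
  have hL1 : 1 ≤ L := by nlinarith
  have hγ0 : 0 ≤ γ := by rw [hγ]; positivity
  have hmk : (m : ℝ) * k ≤ L ^ 2 * n := by rw [hL2]; nlinarith
  refine (ratio_bound n k m (by omega) (by omega) (1 / (4 * 2 ^ k)) rfl L γ hL0 hγ0 hγ.le
    hmk).trans ?_
  rw [← hP]
  have hk9 : (0 : ℝ) < (k : ℝ) ^ 9 := by positivity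
  have hk8 : (18432 : ℝ) ≤ (k : ℝ) ^ 8 := by
    calc (18432 : ℝ) ≤ 16 ^ 8 := by norm_num
      _ ≤ (k : ℝ) ^ 8 := by gcongr
  have hk98 : (k : ℝ) ^ 9 = k ^ 8 * k := by ring
  have hκ1 : 2 * κ ≤ 1 / (4608 * (k * P)) := by
    rw [hκ, mul_div_assoc', div_le_div_iff₀ (by positivity) (by positivity), hk98]
    have : 0 < P * k := by positivity
    nlinarith
  have hκ2 : 2 * κ ≤ 1 / (2 * P) := by
    refine hκ1.trans ?_
    apply one_div_le_one_div_of_le (by positivity)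
    nlinarith
  have e1 : 1 / (4 * P) * n - 3 / 4 * (1 / (4 * P)) * k / P * m ≤ -(2 * κ * n) := by
    have a1 : 3 / 4 * (1 / (4 * P)) * k / P * (P * n / 4) ≤ 3 / 4 * (1 / (4 * P)) * k / P * m := by
      gcongr
    have a2 : 3 / 4 * (1 / (4 * P)) * k / P * (P * n / 4) = (1 / (2 * P)) * n * (3 / 32 * k) := by
      field_simp; norm_num
    have a3 : 1 / (4 * P) * (n : ℝ) = (1 / (2 * P)) * n * (1 / 2) := by
      field_simp; norm_num
    have a4 : 0 ≤ (1 / (2 * P)) * n := by positivity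
    have a5 : 2 * κ * n ≤ (1 / (2 * P)) * n := by gcongr
    rw [a2] at a1
    rw [a3]
    nlinarith
  have e2 : -γ ^ 2 / 2 * n ≤ -(2 * κ * n) := by
    have b1 : 1 / (48 * L) ≤ γ := by
      rw [hγ]; apply one_div_le_one_div_of_le (by positivity); linarith
    have b2 : (1 / (48 * L)) ^ 2 ≤ γ ^ 2 := by gcongr
    have b3 : (1 / (48 * L)) ^ 2 = 2 * (1 / (4608 * (k * P))) := by
      rw [← hL2]; field_simp; norm_num
    have : 2 * κ ≤ γ ^ 2 / 2 := by linarith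
    nlinarith
  have e3 : ((m : ℝ) * k + 1) ^ 2 ≤ (k * P + 1) ^ 2 * (n : ℝ) ^ 2 := by
    rw [← mul_pow]
    gcongr
    rw [hL2] at hmk
    nlinarith
  have hn2 : (1 : ℝ) ≤ (n : ℝ) ^ 2 := one_le_pow₀ hn'
  have hsum : Real.exp (1 / (4 * P) * n - 3 / 4 * (1 / (4 * P)) * k / P * m) +
        Real.exp 2 * ((m : ℝ) * k + 1) ^ 2 * Real.exp (- γ ^ 2 / 2 * n) ≤
      D * (n : ℝ) ^ 2 * Real.exp (-(2 * κ * n)) := by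
    calc _ ≤ (n : ℝ) ^ 2 * Real.exp (-(2 * κ * n)) +
          Real.exp 2 * ((k * P + 1) ^ 2 * (n : ℝ) ^ 2) * Real.exp (-(2 * κ * n)) := by
          apply add_le_add
          · calc _ ≤ Real.exp (-(2 * κ * n)) := Real.exp_le_exp.mpr e1
              _ ≤ _ := le_mul_of_one_le_left (Real.exp_nonneg _) hn2
          · gcongr
      _ = _ := by rw [hD]; ring
  have hD0 : 0 < D := by rw [hD]; positivity
  have hpoly : D * (n : ℝ) ^ 2 ≤ Real.exp (κ * n) := by
    have c1 := Real.pow_div_factorial_le_exp (κ * n) (by positivity) 3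
    refine le_trans ?_ c1
    rw [div_le_iff₀ (by positivity)] at hn
    have : ((Nat.factorial 3 : ℕ) : ℝ) = 6 := by norm_num [Nat.factorial]
    rw [this, le_div_iff₀ (by norm_num)]
    have := mul_le_mul_of_nonneg_right hn (sq_nonneg (n : ℝ))
    nlinarith
  refine hsum.trans ?_
  calc _ ≤ Real.exp (κ * n) * Real.exp (-(2 * κ * n)) := by gcongr
    _ = Real.exp (-(κ * n)) := by rw [← Real.exp_add]; congr 1; ring
    _ ≤ _ := by
      apply Real.exp_le_exp.mpr
      rw [h4]
      have : -2 * n * r / ((k : ℝ) ^ 9 * (P * P)) = -(κ * n) * (r / P) := by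
        rw [hκ]; field_simp
      rw [this]
      have d1 : r / P ≤ 1 := by rw [div_le_one hP0]; exact hrhi
      have d2 : 0 ≤ κ * n := by positivity
      nlinarith

end Final

/-- There is `k0` and, for each `k ≥ k0`, some `δ = δ(k) > 0` such that
for every `r = 2^k ln 2 - ρ` with `0 < ρ ≤ 2` and all large `n`, under the uniform
distribution on the planted model,
`Pr[dist(σ, σ_MAJ(Φ)) > (1/2 - δ) n] ≤ exp(-2 n r/(k^9 4^k))`. -/
theorem statement19 :
    ∃ k0 : ℕ, ∀ k : ℕ, k0 ≤ k → ∃ δ : ℝ, 0 < δ ∧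
      ∀ rho : ℝ, 0 < rho → rho ≤ 2 →
        ∃ N : ℕ, ∀ n : ℕ, N ≤ n →
          let r := 2 ^ k * Real.log 2 - rho
          let m := ⌊r * (n : ℝ)⌋₊
          (((Planted n k m).filter fun p : Formula n k m × Assignment n =>
              (1 / 2 - δ) * n < (hdist p.2 (sigmaMaj n k m p.1) : ℝ)).card : ℝ) /
            ((Planted n k m).card : ℝ) ≤
            Real.exp (-2 * n * r / ((k : ℝ) ^ 9 * 4 ^ k)) := by
  refine ⟨16, fun k hk => ?_⟩
  set L : ℝ := Real.sqrt (k * 2 ^ k) with hL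
  set γ : ℝ := 1 / (16 * (2 * L + 1)) with hγ
  set κ : ℝ := 2 / (2 ^ k * (k : ℝ) ^ 9) with hκ
  set D : ℝ := 1 + Real.exp 2 * ((k : ℝ) * 2 ^ k + 1) ^ 2 with hD
  have hL0 : 0 ≤ L := Real.sqrt_nonneg _
  refine ⟨γ / 4, by positivity, fun rho h0 h2 => ?_⟩
  refine ⟨⌈6 * D / κ ^ 3⌉₊ + 1, fun n hn => ?_⟩
  intro r m
  have hn2 : 6 * D / κ ^ 3 ≤ n :=
    (Nat.le_ceil _).trans (by exact_mod_cast (by omega : ⌈6 * D / κ ^ 3⌉₊ ≤ n))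
  exact final_bound k hk rho h0 h2 L γ κ D r hL hγ hκ hD rfl n (by omega) hn2
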